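/- Chain rule of relative entropy under a measurable map: Let X and Y be standard Borel measurable spaces, let q and p be probability measures on X, and let D : X → Y be a measurable map. Then the Kullback–Leibler divergence decomposes as KL(q ‖ p) = KL(D#q ‖ D#p) + ∫ KL(q(·|D = y) ‖ p(·|D = y)) d(D#q)(y), where D#q and D#p denote the pushforward measures of q and p under D, and q(·|D = y), p(·|D = y) denote regular conditional distributions of the identity given D under q and p respectively. -/

import Mathlib

open MeasureTheory ProbabilityTheory

/-- Kullback–Leibler divergence `∫ log (dq/dp) dq`, taken to be `+∞` when `q` is not
absolutely continuous with respect to `p` (or when the log-likelihood ratio fails to be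
integrable, which for probability measures also corresponds to infinite divergence). -/
noncomputable def klDiv {X : Type*} [MeasurableSpace X] (q p : Measure X) : ENNReal :=
  open scoped Classical in
  if q ≪ p ∧ Integrable (llr q p) q then ENNReal.ofReal (∫ x, llr q p x ∂q) else ⊤

/-!
The map `x ↦ (D x, x)` has the measurable left inverse `Prod.snd`, so by the data processing
inequality in both directions it preserves the divergence. The image of `q` under it disintegrates
as the composition product of `q.map D` with `condDistrib id D q`. The divergence of composition
products splits into a marginal term and a term in which both measures have the same marginal. In
the second term the Radon-Nikodym derivative is that of the kernels, fibre by fibre, and Tonelli's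
theorem turns the divergence into the average of the fibrewise divergences. Applying Tonelli to
`klFun (dq/dp) ≥ 0` rather than to the log-likelihood ratio needs no integrability.
-/

open InformationTheory hiding klDiv

/-- Mathlib's divergence contains the correction term `p.real univ - q.real univ`. -/
lemma klDiv_eq_informationTheory_klDiv_of_measure_eq {X : Type*} [MeasurableSpace X]
    {q p : Measure X} (h : q Set.univ = p Set.univ) :
    klDiv q p = InformationTheory.klDiv q p := by
  simp only [klDiv, InformationTheory.klDiv_def, Measure.real, h, add_sub_cancel_right]

section Map

variable {X Z : Type*} [MeasurableSpace X] [MeasurableSpace Z] {μ ν : Measure X}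
  [IsFiniteMeasure μ] [IsFiniteMeasure ν] {g : X → Z}

lemma klDiv_map_le_of_aemeasurable (hg : AEMeasurable g ν) :
    InformationTheory.klDiv (μ.map g) (ν.map g) ≤ InformationTheory.klDiv μ ν := by
  by_cases hμν : μ ≪ ν
  · rw [Measure.map_congr hg.ae_eq_mk, Measure.map_congr (hμν.ae_eq hg.ae_eq_mk)]
    exact klDiv_map_le μ ν hg.measurable_mk
  · exact le_top.trans_eq (klDiv_of_not_ac hμν).symm

lemma klDiv_map_of_leftInverse {h : Z → X} (hgμ : AEMeasurable g μ) (hgν : AEMeasurable g ν)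
    (hh : Measurable h) (hgh : Function.LeftInverse h g) :
    InformationTheory.klDiv (μ.map g) (ν.map g) = InformationTheory.klDiv μ ν := by
  have map_map_eq {ρ : Measure X} (hgρ : AEMeasurable g ρ) : (ρ.map g).map h = ρ := by
    rw [AEMeasurable.map_map_of_aemeasurable hh.aemeasurable hgρ, hgh.comp_eq_id, Measure.map_id]
  refine (klDiv_map_le_of_aemeasurable hgν).antisymm ?_
  calc InformationTheory.klDiv μ ν
  _ = InformationTheory.klDiv ((μ.map g).map h) ((ν.map g).map h) := by
    rw [map_map_eq hgμ, map_map_eq hgν]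
  _ ≤ InformationTheory.klDiv (μ.map g) (ν.map g) := klDiv_map_le _ _ hh

end Map

section CompProd

variable {α β : Type*} [MeasurableSpace α] [MeasurableSpace β]
  [MeasurableSpace.CountableOrCountablyGenerated α β]

lemma rnDeriv_compProd_right {μ : Measure α} [IsFiniteMeasure μ] {κ η : Kernel α β}
    [IsFiniteKernel κ] [IsFiniteKernel η] (h : ∀ᵐ a ∂μ, κ a ≪ η a) :
    (μ ⊗ₘ κ).rnDeriv (μ ⊗ₘ η) =ᵐ[μ ⊗ₘ η] fun z ↦ κ.rnDeriv η z.1 z.2 := by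
  have hκ : κ =ᵐ[μ] η.withDensity (κ.rnDeriv η) := by
    filter_upwards [h] with a ha using (Kernel.withDensity_rnDeriv_eq ha).symm
  rw [Measure.compProd_congr hκ, Measure.compProd_withDensity (κ.measurable_rnDeriv η)]
  exact Measure.rnDeriv_withDensity _ (κ.measurable_rnDeriv η)

lemma lintegral_klDiv_eq_top_of_not_ae_ac {μ : Measure α} {κ η : Kernel α β}
    [IsFiniteKernel κ] [IsFiniteKernel η] (h : ¬ ∀ᵐ a ∂μ, κ a ≪ η a) :
    ∫⁻ a, InformationTheory.klDiv (κ a) (η a) ∂μ = ⊤ := by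
  have hs : MeasurableSet {a | κ a ≪ η a}ᶜ :=
    (Kernel.measurableSet_absolutelyContinuous κ η).compl
  refine top_unique ?_
  calc (⊤ : ENNReal)
  _ = ∫⁻ _ in {a | κ a ≪ η a}ᶜ, ⊤ ∂μ := by rw [setLIntegral_const, ENNReal.top_mul h]
  _ = ∫⁻ a in {a | κ a ≪ η a}ᶜ, InformationTheory.klDiv (κ a) (η a) ∂μ :=
    setLIntegral_congr_fun hs fun a ha ↦ (klDiv_of_not_ac ha).symm
  _ ≤ ∫⁻ a, InformationTheory.klDiv (κ a) (η a) ∂μ := setLIntegral_le_lintegral _ _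

lemma klDiv_compProd_right (μ : Measure α) [IsFiniteMeasure μ] (κ η : Kernel α β)
    [IsFiniteKernel κ] [IsFiniteKernel η] :
    InformationTheory.klDiv (μ ⊗ₘ κ) (μ ⊗ₘ η) =
      ∫⁻ a, InformationTheory.klDiv (κ a) (η a) ∂μ := by
  by_cases h : ∀ᵐ a ∂μ, κ a ≪ η a
  swap
  · rw [lintegral_klDiv_eq_top_of_not_ae_ac h,
      klDiv_of_not_ac (Measure.absolutelyContinuous_compProd_right_iff.not.mpr h)]
  have hm : Measurable fun z : α × β ↦ ENNReal.ofReal (klFun (κ.rnDeriv η z.1 z.2).toReal) :=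
    (measurable_klFun.comp (κ.measurable_rnDeriv η).ennreal_toReal).ennreal_ofReal
  calc InformationTheory.klDiv (μ ⊗ₘ κ) (μ ⊗ₘ η)
  _ = ∫⁻ z, ENNReal.ofReal (klFun ((μ ⊗ₘ κ).rnDeriv (μ ⊗ₘ η) z).toReal) ∂(μ ⊗ₘ η) :=
    klDiv_eq_lintegral_klFun_of_ac (Measure.absolutelyContinuous_compProd_right_iff.mpr h)
  _ = ∫⁻ z, ENNReal.ofReal (klFun (κ.rnDeriv η z.1 z.2).toReal) ∂(μ ⊗ₘ η) := by
    refine lintegral_congr_ae ?_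
    filter_upwards [rnDeriv_compProd_right h] with z hz using by rw [hz]
  _ = ∫⁻ a, ∫⁻ b, ENNReal.ofReal (klFun (κ.rnDeriv η a b).toReal) ∂(η a) ∂μ :=
    Measure.lintegral_compProd hm
  _ = ∫⁻ a, ∫⁻ b, ENNReal.ofReal (klFun ((κ a).rnDeriv (η a) b).toReal) ∂(η a) ∂μ := by
    refine lintegral_congr fun a ↦ lintegral_congr_ae ?_
    filter_upwards [κ.rnDeriv_eq_rnDeriv_measure (η := η) (a := a)] with b hb using by rw [hb]
  _ = ∫⁻ a, InformationTheory.klDiv (κ a) (η a) ∂μ := by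
    refine lintegral_congr_ae ?_
    filter_upwards [h] with a ha using (klDiv_eq_lintegral_klFun_of_ac ha).symm

lemma klDiv_compProd_eq_add_lintegral (μ ν : Measure α) [IsFiniteMeasure μ] [IsFiniteMeasure ν]
    (κ η : Kernel α β) [IsMarkovKernel κ] [IsMarkovKernel η] :
    InformationTheory.klDiv (μ ⊗ₘ κ) (ν ⊗ₘ η) =
      InformationTheory.klDiv μ ν + ∫⁻ a, InformationTheory.klDiv (κ a) (η a) ∂μ := by
  rw [klDiv_compProd_eq_add, klDiv_compProd_right]

end CompProd

lemma klDiv_map_prodMk_eq_add_lintegral_condDistrib {Ω X Y : Type*} [MeasurableSpace Ω]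
    [MeasurableSpace X] [StandardBorelSpace X] [Nonempty X] [MeasurableSpace Y]
    {μ ν : Measure Ω} [IsFiniteMeasure μ] [IsFiniteMeasure ν]
    (D : Ω → Y) {Z : Ω → X} (hZμ : AEMeasurable Z μ) (hZν : AEMeasurable Z ν) :
    InformationTheory.klDiv (μ.map fun ω ↦ (D ω, Z ω)) (ν.map fun ω ↦ (D ω, Z ω)) =
      InformationTheory.klDiv (μ.map D) (ν.map D)
        + ∫⁻ y, InformationTheory.klDiv (condDistrib Z D μ y) (condDistrib Z D ν y)
            ∂(μ.map D) := by
  rw [← compProd_map_condDistrib hZμ, ← compProd_map_condDistrib hZν,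
    klDiv_compProd_eq_add_lintegral]

theorem klDiv_chain_rule_general {X Y : Type*}
    [MeasurableSpace X] [StandardBorelSpace X] [Nonempty X] [MeasurableSpace Y]
    (q p : Measure X) [IsFiniteMeasure q] [IsFiniteMeasure p]
    {D : X → Y} (hDq : AEMeasurable D q) (hDp : AEMeasurable D p) :
    InformationTheory.klDiv q p =
      InformationTheory.klDiv (q.map D) (p.map D)
        + ∫⁻ y, InformationTheory.klDiv (condDistrib id D q y) (condDistrib id D p y)
            ∂(q.map D) := by
  rw [← klDiv_map_prodMk_eq_add_lintegral_condDistrib D aemeasurable_id aemeasurable_id]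
  exact (klDiv_map_of_leftInverse (hDq.prodMk aemeasurable_id) (hDp.prodMk aemeasurable_id)
    measurable_snd fun _ ↦ rfl).symm

/-- **Chain rule of relative entropy under a measurable map**: for probability measures `q, p`
on a standard Borel space `X` and a measurable map `D : X → Y` into a standard Borel space `Y`,
`KL(q ‖ p) = KL(D#q ‖ D#p) + ∫ KL(q(·|D = y) ‖ p(·|D = y)) d(D#q)(y)`, where the conditional
measures are the regular conditional distributions of the identity given `D`. -/
theorem klDiv_chain_rule {X Y : Type*}
    [MeasurableSpace X] [StandardBorelSpace X] [Nonempty X]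
    [MeasurableSpace Y] [StandardBorelSpace Y] [Nonempty Y]
    (q p : Measure X) [IsProbabilityMeasure q] [IsProbabilityMeasure p]
    (D : X → Y) (hD : Measurable D) :
    klDiv q p =
      klDiv (q.map D) (p.map D)
        + ∫⁻ y, klDiv (condDistrib id D q y) (condDistrib id D p y) ∂(q.map D) := by
  simpa only [klDiv_eq_informationTheory_klDiv_of_measure_eq, Measure.map_apply hD .univ,
    Set.preimage_univ, measure_univ] using
    klDiv_chain_rule_general q p hD.aemeasurable hD.aemeasurable
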